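/- arXiv:2302.08868 — 3 statements merged into one kernel-verified Lean document; each statement's English description precedes it below -/
import Mathlib

section
/- Let h, w be natural numbers with w ≥ 1, let q : Fin (h+1) → ℝ be a tuple of frequencies, and let φ : ℤ → ℝ^{2(h+1)} be the harmonic regressor defined by φ(j) = (cos(q₀ j), sin(q₀ j), ..., cos(q_h j), sin(q_h j)). Define the information matrix A(k) = Σ_{j=k−(w−1)}^{k} φ(j) φ(j)ᵀ. Then for all integers k, the characteristic polynomial of A(k) equals the characteristic polynomial of A(k+1); in particular the eigenvalues of A(k) are the same for every step k. -/
/-- The block-diagonal matrix whose `i`-th block is the planar rotation by the angle `q i`. -/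
noncomputable def blockRotation {ι : Type*} [DecidableEq ι] (q : ι → ℝ) :
    Matrix (ι × Fin 2) (ι × Fin 2) ℝ :=
  Matrix.of fun a b =>
    if a.1 = b.1 then
      !![Real.cos (q a.1), -Real.sin (q a.1); Real.sin (q a.1), Real.cos (q a.1)] a.2 b.2
    else 0

theorem blockRotation_transpose_mul_self {ι : Type*} [Fintype ι] [DecidableEq ι] (q : ι → ℝ) :
    (blockRotation q).transpose * blockRotation q = 1 := by
  ext ⟨i, a⟩ ⟨j, b⟩
  rcases eq_or_ne i j with rfl | hij
  · have hsq := Real.sin_sq_add_cos_sq (q i)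
    fin_cases a <;> fin_cases b <;>
      simp [blockRotation, Matrix.mul_apply, Fintype.sum_prod_type] <;> linarith
  · simp [blockRotation, Matrix.mul_apply, Fintype.sum_prod_type, hij, hij.symm]

theorem blockRotation_mulVec_harmonic {ι : Type*} [Fintype ι] [DecidableEq ι] (q : ι → ℝ)
    (φ : ℤ → ι × Fin 2 → ℝ)
    (hφ : ∀ (j : ℤ) (i : ι),
      φ j (i, 0) = Real.cos (q i * (j : ℝ)) ∧ φ j (i, 1) = Real.sin (q i * (j : ℝ)))
    (j : ℤ) : (blockRotation q).mulVec (φ j) = φ (j + 1) := by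
  ext ⟨i, a⟩
  fin_cases a <;>
    simp [blockRotation, Matrix.mulVec, dotProduct, Fintype.sum_prod_type, hφ,
      mul_add, Real.cos_add, Real.sin_add] <;> ring

/-- Conjugation by an orthogonal matrix preserves the characteristic polynomial. -/
theorem charpoly_mul_mul_transpose_of_orthogonal {n R : Type*} [Fintype n] [DecidableEq n]
    [CommRing R] (U M : Matrix n n R) (hU : U.transpose * U = 1) :
    (U * M * U.transpose).charpoly = M.charpoly := by
  rw [Matrix.charpoly_mul_comm, ← Matrix.mul_assoc, hU, Matrix.one_mul]

/-- The characteristic polynomial (hence the eigenvalues) of the moving-window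
information matrix with harmonic regressor is the same at every step. -/
theorem moving_window_charpoly_invariant
    (h w : ℕ) (hw : 1 ≤ w) (q : Fin (h + 1) → ℝ)
    (φ : ℤ → (Fin (h + 1) × Fin 2) → ℝ)
    (hφ : ∀ (j : ℤ) (i : Fin (h + 1)),
      φ j (i, 0) = Real.cos (q i * (j : ℝ)) ∧ φ j (i, 1) = Real.sin (q i * (j : ℝ)))
    (A : ℤ → Matrix (Fin (h + 1) × Fin 2) (Fin (h + 1) × Fin 2) ℝ)
    (hA : ∀ k : ℤ, A k = ∑ j ∈ Finset.Icc (k - ((w : ℤ) - 1)) k,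
      Matrix.vecMulVec (φ j) (φ j)) :
    ∀ k : ℤ, (A k).charpoly = (A (k + 1)).charpoly := by
  intro k
  have hstep : A (k + 1) = blockRotation q * A k * (blockRotation q).transpose := by
    rw [hA, hA, Matrix.mul_sum, Matrix.sum_mul,
      show k + 1 - ((w : ℤ) - 1) = k - ((w : ℤ) - 1) + 1 by ring,
      ← Finset.image_add_right_Icc, Finset.sum_image (by simp)]
    refine Finset.sum_congr rfl fun j _ => ?_
    rw [Matrix.mul_vecMulVec, Matrix.vecMulVec_mul, Matrix.vecMul_transpose,
      blockRotation_mulVec_harmonic q φ hφ]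
  rw [hstep, charpoly_mul_mul_transpose_of_orthogonal _ _ (blockRotation_transpose_mul_self q)]
end

section
/- Let u, v ∈ ℝⁿ with ‖u‖ = ‖v‖ and let R = u uᵀ − v vᵀ. Then every eigenvalue of R is either 0, or equals ‖R‖_F / √2, or equals −‖R‖_F / √2; that is, the rank-two update matrix R has exactly the two nonzero eigenvalues ±‖R‖_F/√2 (where ‖·‖_F is the Frobenius norm), all other eigenvalues being zero. -/
open Matrix in
/-- The squared Frobenius norm of `u uᵀ − v vᵀ`. -/
theorem sum_sq_vecMulVec_sub_vecMulVec {ι : Type*} [Fintype ι] (u v : ι → ℝ) :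
    ∑ i, ∑ j, ((vecMulVec u u - vecMulVec v v) i j) ^ 2 =
      (u ⬝ᵥ u) ^ 2 - 2 * (u ⬝ᵥ v) ^ 2 + (v ⬝ᵥ v) ^ 2 := by
  simp only [dotProduct, sq, Finset.sum_mul_sum]
  simp only [Finset.mul_sum, ← Finset.sum_sub_distrib, ← Finset.sum_add_distrib,
    Matrix.sub_apply, vecMulVec_apply]
  exact Finset.sum_congr rfl fun i _ => Finset.sum_congr rfl fun j _ => by ring

open Matrix in
/-- A nonzero eigenvalue of `u uᵀ − v vᵀ`, where `u` and `v` have the same length, squares to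
`‖u‖⁴ − ⟨u, v⟩²`. -/
theorem eq_zero_or_sq_eq_of_vecMulVec_sub_vecMulVec_mulVec {ι : Type*} [Fintype ι]
    {u v x : ι → ℝ} {μ : ℝ} (huv : u ⬝ᵥ u = v ⬝ᵥ v) (hx : x ≠ 0)
    (h : (vecMulVec u u - vecMulVec v v) *ᵥ x = μ • x) :
    μ = 0 ∨ μ ^ 2 = (u ⬝ᵥ u) ^ 2 - (u ⬝ᵥ v) ^ 2 := by
  have hcomb : (u ⬝ᵥ x) • u - (v ⬝ᵥ x) • v = μ • x := by
    rw [← h, sub_mulVec, vecMulVec_mulVec, vecMulVec_mulVec]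
    simp
  have hu := congrArg (u ⬝ᵥ ·) hcomb
  have hv := congrArg (v ⬝ᵥ ·) hcomb
  simp only [dotProduct_sub, dotProduct_smul, smul_eq_mul, ← huv, dotProduct_comm v u] at hu hv
  by_cases hsq : μ ^ 2 = (u ⬝ᵥ u) ^ 2 - (u ⬝ᵥ v) ^ 2
  · exact Or.inr hsq
  have hne : μ ^ 2 - ((u ⬝ᵥ u) ^ 2 - (u ⬝ᵥ v) ^ 2) ≠ 0 := sub_ne_zero.mpr hsq
  have hux : u ⬝ᵥ x = 0 := by
    refine (mul_eq_zero.mp ?_).resolve_left hne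
    linear_combination (-(u ⬝ᵥ u) - μ) * hu + (u ⬝ᵥ v) * hv
  have hvx : v ⬝ᵥ x = 0 := by
    refine (mul_eq_zero.mp ?_).resolve_left hne
    linear_combination (u ⬝ᵥ u - μ) * hv - (u ⬝ᵥ v) * hu
  rw [hux, hvx, zero_smul, zero_smul, sub_zero] at hcomb
  exact Or.inl ((smul_eq_zero.mp hcomb.symm).resolve_right hx)


/-- If `‖u‖ = ‖v‖`, then every eigenvalue of the rank-two update `R = u uᵀ − v vᵀ`
is either `0`, or `‖R‖_F / √2`, or `−‖R‖_F / √2`, where `‖·‖_F` is the Frobenius norm. -/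
theorem rank_two_update_eigenvalues
    (n : ℕ) (u v : EuclideanSpace ℝ (Fin n)) (huv : ‖u‖ = ‖v‖)
    (R : Matrix (Fin n) (Fin n) ℝ)
    (hR : R = Matrix.vecMulVec (fun i => u i) (fun i => u i) -
      Matrix.vecMulVec (fun i => v i) (fun i => v i))
    (F : ℝ) (hF : F = Real.sqrt (∑ i : Fin n, ∑ j : Fin n, (R i j) ^ 2)) :
    ∀ μ : ℝ, (∃ x : Fin n → ℝ, x ≠ 0 ∧ R.mulVec x = μ • x) →
      μ = 0 ∨ μ = F / Real.sqrt 2 ∨ μ = -(F / Real.sqrt 2) := by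
  rintro μ ⟨x, hx, h⟩
  have hnorm : (fun i => u i) ⬝ᵥ (fun i => u i) = (fun i => v i) ⬝ᵥ (fun i => v i) := by
    have hsq : ‖u‖ ^ 2 = ‖v‖ ^ 2 := by rw [huv]
    simpa only [EuclideanSpace.real_norm_sq_eq, dotProduct, ← sq] using hsq
  have hFsq : F ^ 2 = ∑ i, ∑ j, (R i j) ^ 2 := by
    rw [hF, Real.sq_sqrt]
    positivity
  rw [hR] at h
  refine (eq_zero_or_sq_eq_of_vecMulVec_sub_vecMulVec_mulVec hnorm hx h).imp_right fun hμ => ?_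
  rw [← sq_eq_sq_iff_eq_or_eq_neg, div_pow, Real.sq_sqrt zero_le_two, hFsq, hR,
    sum_sq_vecMulVec_sub_vecMulVec, hμ, ← hnorm]
  ring
end

section
/- Let A be an invertible n × n real matrix, θ ∈ ℝⁿ, b ∈ ℝⁿ with A θ = b. Let u, v, d ∈ ℝⁿ, set Q = [u v] (the n × 2 matrix with columns u, v), D = diag(1, −1), Γ = A⁻¹, U = Γ Q, and S = D + Qᵀ Γ Q. Assume S is invertible and A' = A + u uᵀ − v vᵀ is invertible. Then the vector θ' = (I − U S⁻¹ Qᵀ)(θ + Γ d) satisfies A' θ' = b + d; i.e., the recursive parameter update solves the updated linear system. -/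
open scoped Matrix

/-- A Woodbury-type factorisation: correcting `A + Q D V` on the right by
`1 - A⁻¹ Q (D + V A⁻¹ Q)⁻¹ V` recovers `A` when `D` is an involution. -/
theorem Matrix.add_mul_mul_mul_one_sub_eq {m k R : Type*} [Fintype m] [DecidableEq m]
    [Fintype k] [DecidableEq k] [CommRing R] (A : Matrix m m R) (Q : Matrix m k R)
    (D : Matrix k k R) (V : Matrix k m R) (hA : IsUnit A.det) (hD : D * D = 1)
    (hS : IsUnit (D + V * A⁻¹ * Q).det) :
    (A + Q * D * V) * (1 - A⁻¹ * Q * (D + V * A⁻¹ * Q)⁻¹ * V) = A := by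
  have hQ : (A + Q * D * V) * (A⁻¹ * Q) = Q * D * (D + V * A⁻¹ * Q) := by
    rw [Matrix.add_mul, Matrix.mul_nonsing_inv_cancel_left _ _ hA, Matrix.mul_add,
      Matrix.mul_assoc Q D D, hD, Matrix.mul_one]
    simp only [Matrix.mul_assoc]
  rw [Matrix.mul_sub, Matrix.mul_one, ← Matrix.mul_assoc, ← Matrix.mul_assoc, hQ,
    Matrix.mul_nonsing_inv_cancel_right _ _ hS, add_sub_cancel_right]

/-- The recursive parameter update `θ' = (I − U S⁻¹ Qᵀ)(θ + Γ d)` solves the updated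
linear system `A' θ' = b + d`, where `A' = A + u uᵀ − v vᵀ`, `Γ = A⁻¹`, `U = Γ Q`,
`Q = [u v]`, `S = D + Qᵀ Γ Q`, `D = diag(1, −1)`. -/
theorem recursive_parameter_update
    (n : ℕ) (A : Matrix (Fin n) (Fin n) ℝ) (hA : IsUnit A.det)
    (θ b : Fin n → ℝ) (hθ : A.mulVec θ = b)
    (u v d : Fin n → ℝ)
    (Q : Matrix (Fin n) (Fin 2) ℝ) (hQ : ∀ i, Q i 0 = u i ∧ Q i 1 = v i)
    (D : Matrix (Fin 2) (Fin 2) ℝ) (hD : D = !![(1 : ℝ), 0; 0, -1])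
    (Γ : Matrix (Fin n) (Fin n) ℝ) (hΓ : Γ = A⁻¹)
    (U : Matrix (Fin n) (Fin 2) ℝ) (hU : U = Γ * Q)
    (S : Matrix (Fin 2) (Fin 2) ℝ) (hS : S = D + Qᵀ * Γ * Q)
    (hSinv : IsUnit S.det)
    (A' : Matrix (Fin n) (Fin n) ℝ)
    (hA' : A' = A + Matrix.vecMulVec u u - Matrix.vecMulVec v v)
    (hA'inv : IsUnit A'.det)
    (θ' : Fin n → ℝ)
    (hθ' : θ' = ((1 : Matrix (Fin n) (Fin n) ℝ) - U * S⁻¹ * Qᵀ).mulVec (θ + Γ.mulVec d)) :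
    A'.mulVec θ' = b + d := by
  have hrank : A' = A + Q * D * Qᵀ := by
    rw [hA', hD, add_sub_assoc]
    congr 1
    ext i j
    simp [Matrix.mul_apply, Fin.sum_univ_two, Matrix.vecMulVec_apply, hQ, sub_eq_add_neg]
  have hDD : D * D = 1 := by
    simp [hD, Matrix.one_fin_two]
  subst hΓ hU hS
  rw [hθ', Matrix.mulVec_mulVec, hrank, Matrix.add_mul_mul_mul_one_sub_eq A Q D Qᵀ hA hDD hSinv,
    Matrix.mulVec_add, hθ, Matrix.mulVec_mulVec, Matrix.mul_nonsing_inv _ hA, Matrix.one_mulVec]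
end
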